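/- Let P be a Poisson (2-3)-algebra over a field F, let A be a subalgebra of P and let B be an ideal of P. Then AB, the F-subspace of P generated by the set {ab : a ∈ A, b ∈ B}, is a subalgebra of P. -/

import Mathlib

/-- A Poisson (2-3)-algebra structure: the (possibly non-unital) commutative
associative `F`-algebra `P` carries an `F`-trilinear, alternating bracket
satisfying the fundamental identity and the Leibniz (2-3)-identity. -/
structure IsPoisson23 (F : Type*) [Field F] {P : Type*} [NonUnitalCommRing P]
    [Module F P] [SMulCommClass F P P] [IsScalarTower F P P]
    (br : P → P → P → P) : Prop where
  add_fst : ∀ a₁ a₂ b c, br (a₁ + a₂) b c = br a₁ b c + br a₂ b c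
  add_snd : ∀ a b₁ b₂ c, br a (b₁ + b₂) c = br a b₁ c + br a b₂ c
  add_trd : ∀ a b c₁ c₂, br a b (c₁ + c₂) = br a b c₁ + br a b c₂
  smul_fst : ∀ (l : F) (a b c : P), br (l • a) b c = l • br a b c
  smul_snd : ∀ (l : F) (a b c : P), br a (l • b) c = l • br a b c
  smul_trd : ∀ (l : F) (a b c : P), br a b (l • c) = l • br a b c
  alternating : ∀ a b c, a = b ∨ b = c ∨ a = c → br a b c = 0
  fundamental : ∀ a₁ a₂ a₃ b c,
    br (br a₁ a₂ a₃) b c =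
      br (br a₁ b c) a₂ a₃ + br a₁ (br a₂ b c) a₃ + br a₁ a₂ (br a₃ b c)
  leibniz : ∀ a₁ a₂ b c, br (a₁ * a₂) b c = a₂ * br a₁ b c + a₁ * br a₂ b c

variable {F P : Type*} [Field F] [NonUnitalCommRing P]
  [Module F P] [SMulCommClass F P P] [IsScalarTower F P P]

/-- A subalgebra of a Poisson (2-3)-algebra: an `F`-subspace closed under the
product and the ternary bracket. -/
def IsSubalgebra (br : P → P → P → P) (S : Submodule F P) : Prop :=
  (∀ a ∈ S, ∀ b ∈ S, a * b ∈ S) ∧ (∀ a ∈ S, ∀ b ∈ S, ∀ c ∈ S, br a b c ∈ S)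

/-- An ideal of a Poisson (2-3)-algebra: an `F`-subspace `I` with `ab ∈ I` and
`[a,b,c] ∈ I` for all `a ∈ I` and `b, c ∈ P`. -/
def IsIdeal (br : P → P → P → P) (I : Submodule F P) : Prop :=
  (∀ a ∈ I, ∀ b : P, a * b ∈ I) ∧ (∀ a ∈ I, ∀ b c : P, br a b c ∈ I)

theorem IsPoisson23.swap12 {br : P → P → P → P} (hP : IsPoisson23 F br) (a b c : P) :
    br a b c = - br b a c := by
  have h := hP.alternating (a + b) (a + b) c (Or.inl rfl)
  rw [hP.add_fst, hP.add_snd, hP.add_snd, hP.alternating a a c (Or.inl rfl),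
    hP.alternating b b c (Or.inl rfl), zero_add, add_zero] at h
  exact eq_neg_of_add_eq_zero_left h

theorem IsPoisson23.swap13 {br : P → P → P → P} (hP : IsPoisson23 F br) (a b c : P) :
    br a b c = - br c b a := by
  have h := hP.alternating (a + c) b (a + c) (Or.inr (Or.inr rfl))
  rw [hP.add_fst, hP.add_trd, hP.add_trd, hP.alternating a b a (Or.inr (Or.inr rfl)),
    hP.alternating c b c (Or.inr (Or.inr rfl)), zero_add, add_zero] at h
  exact eq_neg_of_add_eq_zero_left h

theorem IsPoisson23.leibniz_snd {br : P → P → P → P} (hP : IsPoisson23 F br) (a x y c : P) :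
    br a (x * y) c = y * br a x c + x * br a y c := by
  rw [hP.swap12, hP.leibniz, hP.swap12 a x, hP.swap12 a y, mul_neg, mul_neg, neg_add]

theorem IsPoisson23.leibniz_trd {br : P → P → P → P} (hP : IsPoisson23 F br) (a b x y : P) :
    br a b (x * y) = y * br a b x + x * br a b y := by
  rw [hP.swap13, hP.leibniz, hP.swap13 a b x, hP.swap13 a b y, mul_neg, mul_neg, neg_add]

theorem subalgebra_mul_ideal (br : P → P → P → P) (hP : IsPoisson23 F br)
    (A B : Submodule F P) (hA : IsSubalgebra br A) (hB : IsIdeal br B) :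
    IsSubalgebra br
      (Submodule.span F {x : P | ∃ a ∈ A, ∃ b ∈ B, x = a * b}) := by
  have key : ∀ a ∈ A, ∀ b ∈ B,
      a * b ∈ Submodule.span F {x : P | ∃ a ∈ A, ∃ b ∈ B, x = a * b} :=
    fun a ha b hb => Submodule.subset_span ⟨a, ha, b, hb, rfl⟩
  generalize hS : Submodule.span F {x : P | ∃ a ∈ A, ∃ b ∈ B, x = a * b} = S at key
  have ind : ∀ p : P → Prop, (∀ a ∈ A, ∀ b ∈ B, p (a * b)) →
      (∀ x y, p x → p y → p (x + y)) → (∀ (l : F) x, p x → p (l • x)) → p 0 →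
      ∀ x ∈ S, p x := by
    intro p h1 h2 h3 h4 x hx
    rw [← hS] at hx
    induction hx using Submodule.span_induction with
    | mem x hx => obtain ⟨a, ha, b, hb, rfl⟩ := hx; exact h1 a ha b hb
    | zero => exact h4
    | add x y _ _ hx hy => exact h2 x y hx hy
    | smul l x _ hx => exact h3 l x hx
  have z1 : ∀ b c, br 0 b c = 0 := fun b c => by
    simpa using hP.smul_fst 0 0 b c
  have z2 : ∀ a c, br a 0 c = 0 := fun a c => by
    simpa using hP.smul_snd 0 a 0 c
  have z3 : ∀ a b, br a b 0 = 0 := fun a b => by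
    simpa using hP.smul_trd 0 a b 0
  refine ⟨?_, ?_⟩
  · intro x hx y hy
    refine ind (fun x => x * y ∈ S) ?_ ?_ ?_ ?_ x hx
    · intro a ha b hb
      rw [mul_assoc]
      exact key a ha _ (hB.1 b hb y)
    · intro u v hu hv
      rw [add_mul]
      exact S.add_mem hu hv
    · intro l u hu
      rw [smul_mul_assoc]
      exact S.smul_mem l hu
    · rw [zero_mul]
      exact S.zero_mem
  · intro x hx y hy z hz
    refine ind (fun x => br x y z ∈ S) ?_ ?_ ?_ ?_ x hx
    · intro a₁ ha₁ b₁ hb₁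
      refine ind (fun y => br (a₁ * b₁) y z ∈ S) ?_ ?_ ?_ ?_ y hy
      · intro a₂ ha₂ b₂ hb₂
        refine ind (fun z => br (a₁ * b₁) (a₂ * b₂) z ∈ S) ?_ ?_ ?_ ?_ z hz
        · intro a₃ ha₃ b₃ hb₃
          rw [hP.leibniz]
          refine S.add_mem ?_ (key a₁ ha₁ _ (hB.2 b₁ hb₁ _ _))
          rw [hP.leibniz_snd, mul_add]
          refine S.add_mem ?_ ?_
          · rw [hP.leibniz_trd, mul_add, mul_add]
            refine S.add_mem ?_ ?_
            · have h := key _ (hA.2 a₁ ha₁ a₂ ha₂ a₃ ha₃) _ (hB.1 b₁ hb₁ (b₂ * b₃))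
              rwa [mul_comm, mul_assoc, mul_assoc] at h
            · have h := key a₃ ha₃ _ (hB.1 b₁ hb₁ (b₂ * br a₁ a₂ b₃))
              rwa [mul_left_comm, mul_left_comm a₃] at h
          · rw [mul_left_comm]
            exact key a₂ ha₂ _ (hB.1 b₁ hb₁ _)
        · intro u v hu hv
          rw [hP.add_trd]
          exact S.add_mem hu hv
        · intro l u hu
          rw [hP.smul_trd]
          exact S.smul_mem l hu
        · rw [z3]
          exact S.zero_mem
      · intro u v hu hv
        rw [hP.add_snd]
        exact S.add_mem hu hv
      · intro l u hu
        rw [hP.smul_snd]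
        exact S.smul_mem l hu
      · rw [z2]
        exact S.zero_mem
    · intro u v hu hv
      rw [hP.add_fst]
      exact S.add_mem hu hv
    · intro l u hu
      rw [hP.smul_fst]
      exact S.smul_mem l hu
    · rw [z1]
      exact S.zero_mem
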